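/- Let t ≥ 1 and let a_1, …, a_t be positive integers such that the numbers 2^{a_1}+1, …, 2^{a_t}+1 are pairwise coprime. Then for every rational number x with odd denominator, ∑_{i_1=1}^{2^{a_1}} ∑_{i_2=1}^{2^{a_2}} ⋯ ∑_{i_t=1}^{2^{a_t}} V(x + ∑_{j=1}^t i_j/(2^{a_j}+1)) = 2^{a_1 + ⋯ + a_t − 1} + V(2; a_1, …, a_t; x). -/

import Mathlib

/-- `IsV2 V` says that `V : ℚ → ℚ` is the Kubert `V`-function in characteristic 2:
for any rational `x` (with odd denominator), any `k ≥ 1` and any integer `a` with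
`0 ≤ a < 2^k - 1` such that `x - a/(2^k - 1)` is an integer, `V x` equals the
binary digit sum of `a` divided by `k`. -/
def IsV2 (V : ℚ → ℚ) : Prop :=
  ∀ (x : ℚ) (k a : ℕ), 0 < k → a < 2 ^ k - 1 →
    (∃ z : ℤ, x - (a : ℚ) / ((2 : ℚ) ^ k - 1) = (z : ℚ)) →
    V x = ((Nat.digits 2 a).sum : ℚ) / (k : ℚ)

/-- `Vmulti V r x = V(2; r₁, …, r_t; x) = ∑_{S ⊆ {1,…,t}} (-1)^{t - |S|} V((∏_{j ∈ S} (2^{r_j}+1)) x)`. -/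
def Vmulti (V : ℚ → ℚ) {t : ℕ} (r : Fin t → ℕ) (x : ℚ) : ℚ :=
  ∑ S : Finset (Fin t), (-1 : ℚ) ^ (t - S.card) * V ((∏ j ∈ S, ((2 : ℚ) ^ (r j) + 1)) * x)

lemma aux_digits (k : ℕ) : ∀ a : ℕ, a < 2 ^ k →
    (Nat.digits 2 a).sum + ∑ j ∈ Finset.range k, a / 2 ^ (j + 1) = a := by
  induction k with
  | zero => intro a ha; simp at ha; subst ha; simp
  | succ k ih =>
    intro a ha
    rcases Nat.eq_zero_or_pos a with h0 | h0
    · subst h0; simp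
    · rw [Nat.digits_def' (by norm_num) h0, Finset.sum_range_succ']
      have h2 : a / 2 < 2 ^ k := by rw [pow_succ] at ha; omega
      have := ih (a / 2) h2
      have e : ∀ j, a / 2 ^ (j + 1 + 1) = a / 2 / 2 ^ (j + 1) := by
        intro j; rw [Nat.div_div_eq_div_mul, pow_succ' 2 (j + 1)]
      simp only [e, List.sum_cons, zero_add, pow_one]
      omega

lemma aux_floor (k a i : ℕ) (hi : i ≤ k) (ha : a < 2 ^ k - 1) :
    ⌊(2 : ℚ) ^ i * ((a : ℚ) / ((2 : ℚ) ^ k - 1))⌋ = ((a / 2 ^ (k - i) : ℕ) : ℤ) := by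
  have hP : (a : ℚ) + 1 < 2 ^ k := by
    have : a + 1 < 2 ^ k := by omega
    exact_mod_cast this
  have hpos : (0 : ℚ) < 2 ^ k - 1 := by
    have : (0 : ℚ) ≤ a := by positivity
    linarith
  obtain ⟨q, hq⟩ : ∃ q, q = a / 2 ^ (k - i) := ⟨_, rfl⟩
  have h1 := Nat.div_mul_le_self a (2 ^ (k - i))
  have h2 : a < (a / 2 ^ (k - i) + 1) * 2 ^ (k - i) := by
    have := Nat.lt_div_mul_add (a := a) (b := 2 ^ (k - i)) (by positivity)
    rw [add_mul]; omega
  rw [← hq] at h1 h2 ⊢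
  have hk : (2 : ℚ) ^ k = 2 ^ i * 2 ^ (k - i) := by rw [← pow_add]; congr 1; omega
  have hi0 : (0 : ℚ) < 2 ^ i := by positivity
  have h1' : (q : ℚ) * 2 ^ (k - i) ≤ a := by exact_mod_cast h1
  have h2' : (a : ℚ) + 1 ≤ (q + 1) * 2 ^ (k - i) := by exact_mod_cast h2
  rw [Int.floor_eq_iff, ← mul_div_assoc, le_div_iff₀ hpos, div_lt_iff₀ hpos]
  have hq0 : (0 : ℚ) ≤ q := by positivity
  have hqi : (q : ℚ) + 1 ≤ 2 ^ i := by
    have : q < 2 ^ i := by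
      rw [hq, Nat.div_lt_iff_lt_mul (by positivity), ← pow_add]
      have : i + (k - i) = k := by omega
      rw [this]; omega
    exact_mod_cast this
  push_cast
  constructor
  · have := mul_le_mul_of_nonneg_left h1' hi0.le
    rw [hk]; nlinarith
  · have := mul_le_mul_of_nonneg_left h2' hi0.le
    by_cases hc : (q : ℚ) + 1 < 2 ^ i
    · rw [hk]; nlinarith
    · have hc' : (q : ℚ) + 1 = 2 ^ i := by linarith
      rw [hc']
      have := mul_lt_mul_of_pos_left hP hi0
      nlinarith

lemma aux_fract (k a : ℕ) (ha : a < 2 ^ k - 1) :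
    ∑ i ∈ Finset.range k, Int.fract ((2 : ℚ) ^ i * ((a : ℚ) / ((2 : ℚ) ^ k - 1)))
      = ((Nat.digits 2 a).sum : ℚ) := by
  have hP : (a : ℚ) + 1 < 2 ^ k := by
    have : a + 1 < 2 ^ k := by omega
    exact_mod_cast this
  have hpos : (0 : ℚ) < 2 ^ k - 1 := by
    have : (0 : ℚ) ≤ a := by positivity
    linarith
  have h := aux_digits k a (by omega)
  have h' : ((Nat.digits 2 a).sum : ℚ) + ∑ j ∈ Finset.range k, ((a / 2 ^ (j + 1) : ℕ) : ℚ) = a := by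
    exact_mod_cast h
  have e : ∀ i ∈ Finset.range k, Int.fract ((2 : ℚ) ^ i * ((a : ℚ) / ((2 : ℚ) ^ k - 1)))
      = (2 : ℚ) ^ i * ((a : ℚ) / ((2 : ℚ) ^ k - 1)) - ((a / 2 ^ (k - i) : ℕ) : ℚ) := by
    intro i hi
    rw [Int.fract, aux_floor k a i (Finset.mem_range.1 hi).le ha, Int.cast_natCast]
  rw [Finset.sum_congr rfl e, Finset.sum_sub_distrib, ← Finset.sum_mul]
  have g : ∑ i ∈ Finset.range k, (2 : ℚ) ^ i = 2 ^ k - 1 := by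
    rw [geom_sum_eq (by norm_num)]; norm_num
  rw [g, mul_div_cancel₀ _ hpos.ne']
  rw [← Finset.sum_range_reflect] at h'
  have : ∑ i ∈ Finset.range k, ((a / 2 ^ (k - i) : ℕ) : ℚ)
      = ∑ j ∈ Finset.range k, ((a / 2 ^ (k - 1 - j + 1) : ℕ) : ℚ) := by
    apply Finset.sum_congr rfl
    intro i hi
    have := Finset.mem_range.1 hi
    rw [show k - 1 - i + 1 = k - i by omega]
  rw [this]; linarith

lemma aux_V (V : ℚ → ℚ) (hV : IsV2 V) (k : ℕ) (hk : 0 < k) (x : ℚ)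
    (h : ∃ z : ℤ, ((2 : ℚ) ^ k - 1) * x = z) :
    V x = (∑ i ∈ Finset.range k, Int.fract ((2 : ℚ) ^ i * x)) / k := by
  obtain ⟨z, hz⟩ := h
  have h2 : 2 ≤ 2 ^ k := by
    calc 2 = 2 ^ 1 := rfl
      _ ≤ 2 ^ k := Nat.pow_le_pow_right (by norm_num) hk
  have hposN : 0 < 2 ^ k - 1 := by omega
  have hcast : ((2 ^ k - 1 : ℕ) : ℚ) = (2 : ℚ) ^ k - 1 := by
    rw [Nat.cast_sub (by omega)]; push_cast; ring
  have hpos : (0 : ℚ) < 2 ^ k - 1 := by rw [← hcast]; exact_mod_cast hposN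
  obtain ⟨P, hPdef⟩ : ∃ P, P = 2 ^ k - 1 := ⟨_, rfl⟩
  rw [← hPdef] at hposN hcast
  have hP0 : (0 : ℤ) < P := by exact_mod_cast hposN
  have hm := Int.emod_nonneg z hP0.ne'
  have hl := Int.emod_lt_of_pos z hP0
  have hd := Int.emod_add_mul_ediv z P
  obtain ⟨a, haa⟩ := Int.eq_ofNat_of_zero_le hm
  rw [haa] at hl hd
  have ha : a < 2 ^ k - 1 := by rw [← hPdef]; exact_mod_cast hl
  have hd' : (a : ℚ) + ((2 : ℚ) ^ k - 1) * ((z / P : ℤ) : ℚ) = z := by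
    rw [← hcast]; exact_mod_cast hd
  have hx : x = (a : ℚ) / ((2 : ℚ) ^ k - 1) + ((z / P : ℤ) : ℚ) := by
    field_simp
    linarith
  rw [hV x k a hk ha ⟨z / P, by rw [hx]; ring⟩, ← aux_fract k a ha]
  congr 1
  apply Finset.sum_congr rfl
  intro i _
  conv_rhs => rw [hx]
  rw [mul_add, show (2 : ℚ) ^ i * ((z / P : ℤ) : ℚ) = ((2 ^ i * (z / P) : ℤ) : ℚ) by push_cast; ring,
    Int.fract_add_intCast]

lemma aux_perm (N : ℕ) (hN : 0 < N) (g : ℤ → ℚ) (hg : ∀ n m : ℤ, g (n + N * m) = g n)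
    (m : ℤ) (M : ℕ) (hM : Nat.Coprime M N) :
    ∑ i ∈ Finset.range N, g (m + M * i) = ∑ i ∈ Finset.range N, g i := by
  have hN' : (0 : ℤ) < N := by exact_mod_cast hN
  have key : ∀ i : ℕ, (((m + M * i) % N).toNat : ℤ) = (m + M * i) % N := fun i =>
    Int.toNat_of_nonneg (Int.emod_nonneg _ hN'.ne')
  have hmaps : ∀ i ∈ Finset.range N, ((m + M * i) % N).toNat ∈ Finset.range N := by
    intro i _
    rw [Finset.mem_range]
    have := Int.emod_lt_of_pos (m + M * i) hN'
    rw [← key i] at this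
    exact_mod_cast this
  have hinj : Set.InjOn (fun i : ℕ => ((m + M * i) % N).toNat) (Finset.range N) := by
    intro i hi j hj hij
    have hij' : ((m + M * i) % N) = ((m + M * j) % N) := by
      rw [← key i, ← key j]; exact_mod_cast hij
    have h1 : (m + M * i) ≡ (m + M * j) [ZMOD N] := hij'
    have h2 : (M * i : ℤ) ≡ M * j [ZMOD N] := Int.ModEq.add_left_cancel' m h1
    have h3 : M * i ≡ M * j [MOD N] := by
      rw [← Int.natCast_modEq_iff]; push_cast; exact h2
    have h4 : i ≡ j [MOD N] := Nat.ModEq.cancel_left_of_coprime (by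
      rw [Nat.gcd_comm]; exact hM) h3
    exact Nat.ModEq.eq_of_lt_of_lt h4 (by simpa using hi) (by simpa using hj)
  apply Finset.sum_nbij (fun i : ℕ => ((m + M * i) % N).toNat) hmaps hinj
  · exact Finset.surjOn_of_injOn_of_card_le _ hmaps hinj le_rfl
  · intro i _
    rw [key i]
    have := Int.emod_add_mul_ediv (m + M * i) N
    conv_lhs => rw [← this]
    exact hg _ _

lemma aux_dist (N : ℕ) (hN : 0 < N) (M : ℕ) (hM : Nat.Coprime M N) (y : ℚ) :
    ∑ i ∈ Finset.range N, Int.fract (y + M * ((i : ℚ) / N)) = Int.fract (N * y) + ((N : ℚ) - 1) / 2 := by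
  have hN0 : (N : ℚ) ≠ 0 := by positivity
  have hNp : (0 : ℚ) < N := by positivity
  set f := Int.fract (N * y) with hf
  have hy : (N : ℚ) * y = ⌊(N : ℚ) * y⌋ + f := (Int.floor_add_fract _).symm
  have h := aux_perm N hN (fun j => Int.fract (((j : ℚ) + f) / N)) (by
    intro n m
    have : (((n + N * m : ℤ) : ℚ) + f) / N = ((n : ℚ) + f) / N + (m : ℤ) := by
      push_cast; field_simp; ring
    simp only [this, Int.fract_add_intCast]) ⌊(N : ℚ) * y⌋ M hM
  have e1 : ∀ i ∈ Finset.range N, Int.fract (y + M * ((i : ℚ) / N))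
      = Int.fract ((((⌊(N : ℚ) * y⌋ + M * i : ℤ) : ℚ) + f) / N) := by
    intro i _
    congr 1
    push_cast
    rw [eq_div_iff hN0, add_mul, mul_assoc, div_mul_cancel₀ _ hN0]
    linarith
  rw [Finset.sum_congr rfl e1, h]
  have f0 : 0 ≤ f := Int.fract_nonneg _
  have f1 : f < 1 := Int.fract_lt_one _
  have e2 : ∀ i ∈ Finset.range N, Int.fract ((((i : ℤ) : ℚ) + f) / N) = ((i : ℚ) + f) / N := by
    intro i hi
    have hi' : (i : ℚ) + 1 ≤ N := by exact_mod_cast Finset.mem_range.1 hi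
    rw [Int.cast_natCast, Int.fract_eq_self]
    constructor
    · positivity
    · rw [div_lt_one hNp]; linarith
  rw [Finset.sum_congr rfl e2, ← Finset.sum_div, Finset.sum_add_distrib, Finset.sum_const,
    Finset.card_range, nsmul_eq_mul]
  have g : ∑ i ∈ Finset.range N, (i : ℚ) = N * (N - 1) / 2 := by
    clear * -
    induction N with
    | zero => simp
    | succ n ih => rw [Finset.sum_range_succ, ih]; push_cast; ring
  rw [g]; field_simp; ring

lemma aux_VN (V : ℚ → ℚ) (hV : IsV2 V) (x : ℚ) (hx : Odd x.den) (N : ℕ) (hN : Odd N)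
    (M : ℕ) (hM : Nat.Coprime M N) :
    ∑ i ∈ Finset.range N, V (M * (x + (i : ℚ) / N)) = V (M * N * x) + ((N : ℚ) - 1) / 2 := by
  have hN1 : 0 < N := hN.pos
  have hN0 : (N : ℚ) ≠ 0 := by positivity
  have hD : Odd (x.den * N) := hx.mul hN
  obtain ⟨k, hkdef⟩ : ∃ k, k = Nat.totient (x.den * N) := ⟨_, rfl⟩
  have hk : 0 < k := by rw [hkdef]; exact Nat.totient_pos.2 hD.pos
  have h1 : 2 ^ k ≡ 1 [MOD x.den * N] := by
    rw [hkdef]; exact Nat.ModEq.pow_totient (Nat.coprime_two_left.2 hD)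
  have h2 : ((x.den * N : ℕ) : ℤ) ∣ 2 ^ k - 1 := by
    have := (Nat.modEq_iff_dvd.1 h1.symm)
    simpa using this
  obtain ⟨c, hc⟩ := h2
  have hc' : (2 : ℚ) ^ k - 1 = x.den * N * c := by exact_mod_cast hc
  have hd0 : (x.den : ℚ) ≠ 0 := by exact_mod_cast x.den_nz
  have hxd : x * x.den = x.num := Rat.mul_den_eq_num x
  have hk0 : (k : ℚ) ≠ 0 := by positivity
  rw [aux_V V hV k hk (M * N * x) ⟨M * N * N * c * x.num, by
    rw [hc']; push_cast; rw [← hxd]; ring⟩]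
  have e : ∀ i ∈ Finset.range N, V (M * (x + (i : ℚ) / N)) =
      (∑ l ∈ Finset.range k, Int.fract ((2 : ℚ) ^ l * (M * (x + (i : ℚ) / N)))) / k := by
    intro i _
    apply aux_V V hV k hk
    refine ⟨c * M * (N * x.num + x.den * i), ?_⟩
    rw [hc']; push_cast; rw [← hxd]; field_simp
  rw [Finset.sum_congr rfl e, ← Finset.sum_div, Finset.sum_comm]
  have e2 : ∀ l ∈ Finset.range k, ∑ i ∈ Finset.range N, Int.fract ((2 : ℚ) ^ l * (M * (x + (i : ℚ) / N)))
      = Int.fract ((2 : ℚ) ^ l * (M * N * x)) + ((N : ℚ) - 1) / 2 := by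
    intro l _
    have := aux_dist N hN1 (2 ^ l * M) (Nat.Coprime.mul_left
      (Nat.Coprime.pow_left _ (Nat.coprime_two_left.2 hN)) hM) (2 ^ l * M * x)
    rw [show (2 : ℚ) ^ l * (M * N * x) = N * (2 ^ l * M * x) by ring, ← this]
    apply Finset.sum_congr rfl
    intro i _
    congr 1
    push_cast; ring
  rw [Finset.sum_congr rfl e2, Finset.sum_add_distrib, Finset.sum_const, Finset.card_range,
    nsmul_eq_mul, add_div, mul_div_cancel_left₀ _ hk0]

lemma aux_U (V : ℚ → ℚ) (hV : IsV2 V) (x : ℚ) (hx : Odd x.den) (a : ℕ) (ha : 0 < a)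
    (M : ℕ) (hM : Nat.Coprime M (2 ^ a + 1)) :
    ∑ i : Fin (2 ^ a), (V (M * (x + (((i : ℕ) : ℚ) + 1) / ((2 : ℚ) ^ a + 1))) - 1 / 2)
      = (V (M * ((2 : ℚ) ^ a + 1) * x) - 1 / 2) - (V (M * x) - 1 / 2) := by
  have h := aux_VN V hV x hx (2 ^ a + 1) ((Nat.even_pow.2 ⟨even_two, ha.ne'⟩).add_one) M hM
  rw [Finset.sum_range_succ', ← Fin.sum_univ_eq_sum_range
    (fun i => V (M * (x + ((i + 1 : ℕ) : ℚ) / ((2 ^ a + 1 : ℕ) : ℚ))))] at h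
  push_cast at h
  rw [Finset.sum_sub_distrib, Finset.sum_const, Finset.card_univ, Fintype.card_fin, nsmul_eq_mul]
  push_cast
  simp only [zero_div, add_zero] at h
  linarith

lemma aux_sumset (n : ℕ) (F : Finset (Fin (n + 1)) → ℚ) :
    ∑ S : Finset (Fin (n + 1)), F S = ∑ S : Finset (Fin n),
      (F (S.map (Fin.succEmb n)) + F (insert 0 (S.map (Fin.succEmb n)))) := by
  rw [← Finset.powerset_univ, Fin.univ_succ, Finset.cons_eq_insert,
    Finset.sum_powerset_insert (by simp), Finset.sum_add_distrib]
  have : ∀ G : Finset (Fin (n + 1)) → ℚ,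
      ∑ t ∈ (Finset.map (Fin.succEmb n) Finset.univ).powerset, G t
        = ∑ S : Finset (Fin n), G (S.map (Fin.succEmb n)) := by
    intro G
    rw [Finset.map_eq_image, Finset.powerset_image, Finset.sum_image, Finset.powerset_univ]
    · simp only [Finset.map_eq_image]
    · intro s _ t _ h
      exact Finset.image_injective (Fin.succEmb n).injective h
  rw [← this, ← this (fun S => F (insert 0 S))]
  rfl

lemma aux_den (x y : ℚ) (hx : Odd x.den) (hy : Odd y.den) : Odd (x + y).den :=
  Odd.of_dvd_nat (hx.mul hy) (Rat.add_den_dvd x y)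

lemma aux_den2 (a m : ℕ) (ha : 0 < a) : Odd (((m : ℚ) + 1) / ((2 : ℚ) ^ a + 1)).den := by
  have : (((m : ℚ) + 1) / ((2 : ℚ) ^ a + 1)) = (((m + 1 : ℕ) : ℤ) : ℚ) / (((2 ^ a + 1 : ℕ) : ℤ) : ℚ) := by
    push_cast; rfl
  rw [this]
  have h := Rat.den_dvd ((m + 1 : ℕ) : ℤ) ((2 ^ a + 1 : ℕ) : ℤ)
  rw [Rat.divInt_eq_div] at h
  exact Odd.of_dvd_nat ((Nat.even_pow.2 ⟨even_two, ha.ne'⟩).add_one) (by exact_mod_cast h)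

lemma aux_main (V : ℚ → ℚ) (hV : IsV2 V) (t : ℕ) : ∀ (a : Fin t → ℕ) (_ : ∀ j, 0 < a j)
    (_ : ∀ j k, j ≠ k → Nat.Coprime (2 ^ a j + 1) (2 ^ a k + 1))
    (x : ℚ) (_ : Odd x.den),
    ∑ i : (∀ j : Fin t, Fin (2 ^ a j)),
        (V (x + ∑ j, (((i j : ℕ) : ℚ) + 1) / ((2 : ℚ) ^ a j + 1)) - 1 / 2) =
      ∑ S : Finset (Fin t), (-1 : ℚ) ^ (t - S.card) *
        (V ((∏ j ∈ S, ((2 : ℚ) ^ (a j) + 1)) * x) - 1 / 2) := by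
  induction t with
  | zero =>
    intro a _ _ x _
    have : (default : Finset (Fin 0)) = ∅ := Subsingleton.elim _ _
    simp [Finset.univ_unique, this]
  | succ n ih =>
    intro a hpos hcop x hx
    rw [← (Fin.consEquiv (fun j : Fin (n + 1) => Fin (2 ^ a j))).sum_comp, Fintype.sum_prod_type]
    have step : ∀ i0 : Fin (2 ^ a 0), ∑ i : (∀ j : Fin n, Fin (2 ^ a j.succ)),
        (V (x + ∑ j, ((((Fin.consEquiv (fun j : Fin (n + 1) => Fin (2 ^ a j)) (i0, i)) j : ℕ) : ℚ) + 1)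
          / ((2 : ℚ) ^ a j + 1)) - 1 / 2)
        = ∑ S : Finset (Fin n), (-1 : ℚ) ^ (n - S.card) *
        (V ((∏ j ∈ S, ((2 : ℚ) ^ (a j.succ) + 1)) *
          (x + (((i0 : ℕ) : ℚ) + 1) / ((2 : ℚ) ^ a 0 + 1))) - 1 / 2) := by
      intro i0
      rw [← ih (fun j => a j.succ) (fun j => hpos _)
        (fun j k hjk => hcop _ _ (fun h => hjk (Fin.succ_injective _ h)))
        (x + (((i0 : ℕ) : ℚ) + 1) / ((2 : ℚ) ^ a 0 + 1)) (aux_den _ _ hx (aux_den2 _ _ (hpos 0)))]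
      apply Finset.sum_congr rfl
      intro i _
      rw [Fin.sum_univ_succ, ← add_assoc]
      rfl
    rw [Finset.sum_congr rfl (fun i0 _ => step i0), Finset.sum_comm, aux_sumset]
    apply Finset.sum_congr rfl
    intro S _
    rw [← Finset.mul_sum]
    have hM : Nat.Coprime (∏ j ∈ S, (2 ^ (a j.succ) + 1)) (2 ^ a 0 + 1) :=
      Nat.Coprime.prod_left (fun j _ => hcop _ _ (Fin.succ_ne_zero j))
    have := aux_U V hV x hx (a 0) (hpos 0) _ hM
    push_cast at this
    rw [this]
    have hcard : S.card ≤ n := by simpa using S.card_le_univ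
    rw [Finset.prod_insert (by simp), Finset.card_insert_of_notMem (by simp), Finset.card_map,
      Finset.prod_map, show n + 1 - S.card = (n - S.card) + 1 by omega,
      show n + 1 - (S.card + 1) = n - S.card by omega, pow_succ]
    simp only [Fin.coe_succEmb]
    rw [mul_comm ((2 : ℚ) ^ a 0 + 1)]
    ring

/-- Hasse–Davenport style identity: for `t ≥ 1` and positive integers `a₁, …, a_t` with
`2^{a_j}+1` pairwise coprime, for every rational `x` with odd denominator,
`∑_{i₁=1}^{2^{a₁}} ⋯ ∑_{i_t=1}^{2^{a_t}} V(x + ∑_j i_j/(2^{a_j}+1))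
  = 2^{a₁+⋯+a_t-1} + V(2; a₁, …, a_t; x)`. -/
theorem stmt_7 (V : ℚ → ℚ) (hV : IsV2 V) (t : ℕ) (ht : 1 ≤ t)
    (a : Fin t → ℕ) (hpos : ∀ j, 0 < a j)
    (hcop : ∀ j k, j ≠ k → Nat.Coprime (2 ^ a j + 1) (2 ^ a k + 1))
    (x : ℚ) (hx : Odd x.den) :
    ∑ i : (∀ j : Fin t, Fin (2 ^ a j)),
        V (x + ∑ j, (((i j : ℕ) : ℚ) + 1) / ((2 : ℚ) ^ a j + 1)) =
      (2 : ℚ) ^ ((∑ j, a j) - 1) + Vmulti V a x := by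
  have h := aux_main V hV t a hpos hcop x hx
  have hz : ∑ S : Finset (Fin t), (-1 : ℚ) ^ (t - S.card) = 0 := by
    have := Fin.sum_pow_mul_eq_add_pow (n := t) (1 : ℚ) (-1)
    simp only [one_pow, one_mul] at this
    rw [this, add_neg_cancel, zero_pow (by omega)]
  simp only [mul_sub] at h
  rw [Finset.sum_sub_distrib, Finset.sum_sub_distrib, ← Finset.sum_mul, hz, Finset.sum_const,
    Finset.card_univ, Fintype.card_pi, nsmul_eq_mul] at h
  simp only [Fintype.card_fin, Finset.prod_pow_eq_pow_sum] at h
  have hs : 0 < ∑ j, a j :=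
    Finset.sum_pos (fun j _ => hpos j) ⟨⟨0, by omega⟩, Finset.mem_univ _⟩
  obtain ⟨s, hs'⟩ : ∃ s, ∑ j, a j = s + 1 := ⟨∑ j, a j - 1, by omega⟩
  rw [hs'] at h ⊢
  rw [Vmulti, Nat.add_sub_cancel]
  push_cast at h
  rw [pow_succ] at h
  linarith
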